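/- Let n ≥ 1, let x ∈ (0,1), and let ρ₁, ρ₂ be density matrices (n×n complex positive semidefinite matrices of trace 1), and set ρ_Av := x·ρ₁ + (1−x)·ρ₂. Then S(ρ_Av) − x·S(ρ₁) − (1−x)·S(ρ₂) ≤ h(x), where h(x) = −x·log x − (1−x)·log(1−x) is the binary entropy. -/

import Mathlib

open Matrix ComplexOrder

/-- Apply a real function to a Hermitian matrix via the spectral decomposition
`A = U D U*`: the result is `U (f(D)) U*` where `f` acts on the diagonal. -/
noncomputable def mfun {m : Type*} [Fintype m] [DecidableEq m]
    (f : ℝ → ℝ) (A : Matrix m m ℂ) : Matrix m m ℂ :=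
  if hA : A.IsHermitian then hA.cfc f else 0

/-- Matrix logarithm via spectral decomposition, with the convention `log 0 = 0`
(note `Real.log 0 = 0`). -/
noncomputable def matLog {m : Type*} [Fintype m] [DecidableEq m]
    (A : Matrix m m ℂ) : Matrix m m ℂ :=
  mfun Real.log A

/-- The positive semidefinite square root of a positive semidefinite matrix,
via spectral decomposition. -/
noncomputable def matSqrt {m : Type*} [Fintype m] [DecidableEq m]
    (A : Matrix m m ℂ) : Matrix m m ℂ :=
  mfun Real.sqrt A

/-- Real power of a (positive semidefinite / positive definite) matrix via spectral
decomposition. -/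
noncomputable def matRpow {m : Type*} [Fintype m] [DecidableEq m]
    (t : ℝ) (A : Matrix m m ℂ) : Matrix m m ℂ :=
  mfun (fun u => u ^ t) A

/-- The von Neumann entropy `S(ρ) = -Tr(ρ log ρ)`. -/
noncomputable def vnEntropy {m : Type*} [Fintype m] [DecidableEq m]
    (ρ : Matrix m m ℂ) : ℝ :=
  -(Matrix.trace (ρ * matLog ρ)).re

/-- The quantum relative entropy `H(ρ, γ) = Tr(ρ (log ρ - log γ))`. -/
noncomputable def relEntropy {m : Type*} [Fintype m] [DecidableEq m]
    (ρ γ : Matrix m m ℂ) : ℝ :=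
  (Matrix.trace (ρ * (matLog ρ - matLog γ))).re

/-- The trace norm of a Hermitian matrix: the sum of the absolute values of its
eigenvalues. -/
noncomputable def traceNorm {m : Type*} [Fintype m] [DecidableEq m]
    (A : Matrix m m ℂ) : ℝ :=
  if hA : A.IsHermitian then ∑ i, |hA.eigenvalues i| else 0

/-- A density matrix: positive semidefinite with trace 1. -/
def IsDensity {m : Type*} [Fintype m] [DecidableEq m] (ρ : Matrix m m ℂ) : Prop :=
  ρ.PosSemidef ∧ Matrix.trace ρ = 1

/-- The binary entropy `h(x) = -x log x - (1-x) log (1-x)`. -/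
noncomputable def binEntropy (x : ℝ) : ℝ :=
  -(x * Real.log x) - (1 - x) * Real.log (1 - x)

/-- The Renyi relative entropy `H_a(ρ,γ) = (a-1)⁻¹ log Tr(ρ^a γ^(1-a))`. -/
noncomputable def renyiRel {m : Type*} [Fintype m] [DecidableEq m]
    (a : ℝ) (ρ γ : Matrix m m ℂ) : ℝ :=
  (a - 1)⁻¹ * Real.log (Matrix.trace (matRpow a ρ * matRpow (1 - a) γ)).re

/-- The sandwiched Renyi relative entropy
`H̃_a(ρ,γ) = (a-1)⁻¹ log Tr((γ^((1-a)/(2a)) ρ γ^((1-a)/(2a)))^a)`. -/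
noncomputable def sandRenyiRel {m : Type*} [Fintype m] [DecidableEq m]
    (a : ℝ) (ρ γ : Matrix m m ℂ) : ℝ :=
  (a - 1)⁻¹ * Real.log
    (Matrix.trace (matRpow a
      (matRpow ((1 - a) / (2 * a)) γ * ρ * matRpow ((1 - a) / (2 * a)) γ))).re

section Aux
open scoped MatrixOrder Matrix.Norms.L2Operator

noncomputable def wgt {m : Type*} [Fintype m] [DecidableEq m] {B : Matrix m m ℂ}
    (A : Matrix m m ℂ) (hB : B.IsHermitian) (j : m) : ℝ :=
  (((hB.eigenvectorUnitary : Matrix m m ℂ)ᴴ * A * (hB.eigenvectorUnitary : Matrix m m ℂ)) j j).re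

lemma trace_mul_cfc {m : Type*} [Fintype m] [DecidableEq m] {B : Matrix m m ℂ}
    (A : Matrix m m ℂ) (hB : B.IsHermitian) (f : ℝ → ℝ) :
    (Matrix.trace (A * cfc f B)).re = ∑ j, wgt A hB j * f (hB.eigenvalues j) := by
  rw [hB.cfc_eq, IsHermitian.cfc, Unitary.conjStarAlgAut_apply, ← mul_assoc, ← mul_assoc,
    Matrix.trace_mul_comm, ← mul_assoc, ← mul_assoc]
  simp only [Matrix.trace, Matrix.diag, Matrix.mul_diagonal, Complex.re_sum, wgt,
    Function.comp_apply, star_eq_conjTranspose]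
  refine Finset.sum_congr rfl fun j _ => ?_
  exact Complex.re_mul_ofReal _ _

lemma wgt_zero {m : Type*} [Fintype m] [DecidableEq m] {A B : Matrix m m ℂ}
    (hA : A.PosSemidef) (hB : B.IsHermitian) (hAB : (B - A).PosSemidef) (j : m)
    (hj : hB.eigenvalues j = 0) : wgt A hB j = 0 := by
  set U : Matrix m m ℂ := (hB.eigenvectorUnitary : Matrix m m ℂ) with hU
  have h1 := (hA.conjTranspose_mul_mul_same U).diag_nonneg (i := j)
  have h2 := (hAB.conjTranspose_mul_mul_same U).diag_nonneg (i := j)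
  have h3 : (Uᴴ * B * U) j j = 0 := by
    have := hB.conjStarAlgAut_star_eigenvectorUnitary
    rw [Unitary.conjStarAlgAut_star_apply, star_eq_conjTranspose] at this
    rw [hU, this]
    simp [hj]
  rw [mul_sub, sub_mul, Matrix.sub_apply, h3] at h2
  have h1' := (Complex.le_def.1 h1).1
  have h2' := (Complex.le_def.1 h2).1
  simp at h1' h2'
  unfold wgt
  exact le_antisymm h2' h1'

lemma trace_mul_re_nonneg {m : Type*} [Fintype m] [DecidableEq m] {A C : Matrix m m ℂ}
    (hA : A.PosSemidef) (hC : C.PosSemidef) : 0 ≤ (Matrix.trace (A * C)).re := by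
  obtain ⟨X, rfl⟩ := CStarAlgebra.nonneg_iff_eq_star_mul_self.mp hA.nonneg
  rw [mul_assoc, Matrix.trace_mul_comm]
  exact (Complex.le_def.1 (hC.mul_mul_conjTranspose_same X).trace_nonneg).1

lemma matLog_eq {m : Type*} [Fintype m] [DecidableEq m] {A : Matrix m m ℂ}
    (hA : A.IsHermitian) : matLog A = cfc Real.log A := by
  rw [hA.cfc_eq, matLog, mfun, dif_pos hA]

lemma contOn_spec {m : Type*} [Fintype m] [DecidableEq m] {B : Matrix m m ℂ}
    (hB : B.IsHermitian) (g f : ℝ → ℝ) : ContinuousOn g (f '' spectrum ℝ B) := by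
  rw [hB.spectrum_real_eq_range_eigenvalues]
  exact ((Set.finite_range _).image _).continuousOn _

lemma log_shift {m : Type*} [Fintype m] [DecidableEq m] {B : Matrix m m ℂ}
    (hB : B.IsHermitian) (e : ℝ) :
    cfc Real.log (B + algebraMap ℝ _ e) = cfc (fun t => Real.log (t + e)) B := by
  have hB' : IsSelfAdjoint B := hB
  rw [cfc_comp' Real.log (fun t => t + e) B (contOn_spec hB _ _) (by fun_prop),
    cfc_add_const e (fun t => t) B, cfc_id' ℝ B]

lemma log_scale {m : Type*} [Fintype m] [DecidableEq m] {B : Matrix m m ℂ}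
    (hB : B.IsHermitian) (e : ℝ) :
    cfc Real.log (e • B) = cfc (fun t => Real.log (e * t)) B := by
  have hB' : IsSelfAdjoint B := hB
  rw [cfc_comp' Real.log (fun t => e * t) B (contOn_spec hB _ _) (by fun_prop),
    cfc_const_mul_id e B]

open Filter Topology in
lemma tendsto_shift {m : Type*} [Fintype m] [DecidableEq m] {A B : Matrix m m ℂ}
    (hA : A.PosSemidef) (hB : B.IsHermitian) (hAB : (B - A).PosSemidef) :
    Tendsto (fun e : ℝ => (Matrix.trace (A * cfc Real.log (B + algebraMap ℝ _ e))).re) (𝓝[>] 0)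
      (𝓝 (Matrix.trace (A * cfc Real.log B)).re) := by
  simp only [log_shift hB, trace_mul_cfc A hB]
  refine tendsto_finsetSum _ fun j _ => ?_
  by_cases hj : hB.eigenvalues j = 0
  · simp [wgt_zero hA hB hAB j hj]
  · refine Tendsto.const_mul _ ?_
    refine tendsto_nhdsWithin_of_tendsto_nhds ?_
    have : ContinuousAt (fun e : ℝ => Real.log (hB.eigenvalues j + e)) 0 :=
      ContinuousAt.log (by fun_prop) (by simpa using hj)
    simpa [ContinuousAt] using this

lemma key {m : Type*} [Fintype m] [DecidableEq m] {A B : Matrix m m ℂ}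
    (hA : A.PosSemidef) (hB : B.IsHermitian) (hAB : (B - A).PosSemidef) :
    (Matrix.trace (A * cfc Real.log A)).re ≤ (Matrix.trace (A * cfc Real.log B)).re := by
  refine le_of_tendsto_of_tendsto
    (tendsto_shift hA hA.isHermitian (by simpa using Matrix.PosSemidef.zero))
    (tendsto_shift hA hB hAB) ?_
  filter_upwards [self_mem_nhdsWithin] with e he
  have he' : (0:ℝ) < e := he
  have hpos : IsStrictlyPositive (A + algebraMap ℝ (Matrix m m ℂ) e) := by
    rw [Matrix.isStrictlyPositive_iff_posDef]
    refine Matrix.PosDef.posSemidef_add hA ?_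
    rw [Algebra.algebraMap_eq_smul_one]
    exact Matrix.PosDef.one.smul he'
  have hle : A + algebraMap ℝ (Matrix m m ℂ) e ≤ B + algebraMap ℝ (Matrix m m ℂ) e := by
    rw [Matrix.le_iff]; simpa using hAB
  have h := Matrix.le_iff.1 (CFC.log_le_log hle hpos)
  have h2 := trace_mul_re_nonneg hA h
  rw [mul_sub, Matrix.trace_sub, Complex.sub_re, sub_nonneg] at h2
  exact h2

lemma scale {m : Type*} [Fintype m] [DecidableEq m] {A : Matrix m m ℂ}
    (hA : IsDensity A) (x : ℝ) (hx : 0 < x) :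
    (Matrix.trace ((x • A) * cfc Real.log (x • A))).re = x * Real.log x - x * vnEntropy A := by
  have hH := hA.1.isHermitian
  rw [vnEntropy, matLog_eq hH, log_scale hH, smul_mul_assoc, Matrix.trace_smul,
    Complex.smul_re, trace_mul_cfc A hH, trace_mul_cfc A hH]
  have h1 : ∑ j, wgt A hH j = 1 := by
    have := trace_mul_cfc A hH (fun _ => 1)
    rw [cfc_const_one ℝ A, mul_one, hA.2] at this
    simpa using this.symm
  have h2 : ∑ j, wgt A hH j * Real.log (x * hH.eigenvalues j)
      = ∑ j, (wgt A hH j * Real.log x + wgt A hH j * Real.log (hH.eigenvalues j)) := by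
    refine Finset.sum_congr rfl fun j _ => ?_
    by_cases hj : hH.eigenvalues j = 0
    · simp [wgt_zero hA.1 hH (by simpa using Matrix.PosSemidef.zero) j hj]
    · rw [Real.log_mul hx.ne' hj]; ring
  rw [h2, Finset.sum_add_distrib, ← Finset.sum_mul, h1, smul_eq_mul]
  ring

end Aux

theorem concavity_upper_bound_binEntropy (n : ℕ) (hn : 1 ≤ n) (x : ℝ)
    (hx : x ∈ Set.Ioo (0:ℝ) 1)
    (ρ₁ ρ₂ : Matrix (Fin n) (Fin n) ℂ) (h1 : IsDensity ρ₁) (h2 : IsDensity ρ₂) :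
    vnEntropy (x • ρ₁ + (1 - x) • ρ₂) - x * vnEntropy ρ₁ - (1 - x) * vnEntropy ρ₂
      ≤ binEntropy x := by
  obtain ⟨hx0, hx1⟩ := hx
  have hy0 : 0 < 1 - x := by linarith
  have p1 : (x • ρ₁).PosSemidef := h1.1.smul hx0.le
  have p2 : ((1 - x) • ρ₂).PosSemidef := h2.1.smul hy0.le
  have hB := (p1.add p2).isHermitian
  have k1 := key p1 hB (by simpa using p2)
  have k2 := key p2 hB (by simpa using p1)
  rw [scale h1 x hx0] at k1
  rw [scale h2 (1 - x) hy0] at k2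
  have e : vnEntropy (x • ρ₁ + (1 - x) • ρ₂) =
      -(Matrix.trace (x • ρ₁ * cfc Real.log (x • ρ₁ + (1 - x) • ρ₂))).re
      - (Matrix.trace ((1 - x) • ρ₂ * cfc Real.log (x • ρ₁ + (1 - x) • ρ₂))).re := by
    rw [vnEntropy, matLog_eq hB, add_mul, Matrix.trace_add, Complex.add_re]
    ring
  rw [e, binEntropy]
  linarith
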